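/- Let a and b be positive integers with b > a and let n ≥ a+b+2. Every graph G in 𝒢_n^{a,b} contains no fractional [a,b]-factor; in particular, G contains no [a,b]-factor. -/

import Mathlib

open Finset Matrix

namespace SimpleGraph

variable {V : Type*} [Fintype V] [DecidableEq V]

lemma isHermitian_adjMatrix' (G : SimpleGraph V) [DecidableRel G.Adj] :
    (G.adjMatrix ℝ).IsHermitian := by
  rw [Matrix.IsHermitian, conjTranspose_eq_transpose_of_trivial, isSymm_adjMatrix]

/-- The spectral radius (largest adjacency eigenvalue) of a finite simple graph. -/
noncomputable def spectralRadius (G : SimpleGraph V) : ℝ :=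
  letI := Classical.decRel G.Adj
  ⨆ i, (isHermitian_adjMatrix' G).eigenvalues i

/-- `G` has an `[a,b]`-factor: a spanning subgraph all of whose degrees lie in `[a,b]`. -/
def HasABFactor (G : SimpleGraph V) (a b : ℕ) : Prop :=
  ∃ H : SimpleGraph V, H ≤ G ∧ ∀ v : V,
    letI := Classical.decRel H.Adj
    a ≤ H.degree v ∧ H.degree v ≤ b

/-- `G` has a fractional `[a,b]`-factor: a weighting of the edges by values in `[0,1]`
such that the total weight at every vertex lies in `[a,b]`. -/
def HasFractionalABFactor (G : SimpleGraph V) (a b : ℕ) : Prop :=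
  letI := Classical.decRel G.Adj
  ∃ h : Sym2 V → ℝ, (∀ e ∈ G.edgeSet, 0 ≤ h e ∧ h e ≤ 1) ∧
    ∀ v : V, (a : ℝ) ≤ ∑ e ∈ G.incidenceFinset v, h e ∧
      ∑ e ∈ G.incidenceFinset v, h e ≤ (b : ℝ)

end SimpleGraph

/-- `K_a ∨ (K_{n-a-b-1} ∪ (b+1)K_1)`, with vertices `0,…,a-1` forming the `K_a`,
vertices `a,…,n-b-2` forming the `K_{n-a-b-1}`, and the last `b+1` vertices independent. -/
def baseGraph (n a b : ℕ) : SimpleGraph (Fin n) :=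
  SimpleGraph.fromRel (fun i j => (i : ℕ) < a ∨ ((i : ℕ) < n - b - 1 ∧ (j : ℕ) < n - b - 1))

/-- The graph `H_n^{a,b}`: `baseGraph n a b` together with `a-1` extra edges joining the
vertex `n-b-1` (a fixed vertex of the independent part `(b+1)K_1`) to the `a-1`
vertices `a,…,2a-2` of the `K_{n-a-b-1}` part. -/
def Hgraph (n a b : ℕ) : SimpleGraph (Fin n) :=
  SimpleGraph.fromRel (fun i j => (i : ℕ) < a ∨ ((i : ℕ) < n - b - 1 ∧ (j : ℕ) < n - b - 1) ∨
    ((i : ℕ) = n - b - 1 ∧ a ≤ (j : ℕ) ∧ (j : ℕ) < 2 * a - 1))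

/-- The family `𝒢_n^{a,b}`: graphs obtained from `baseGraph n a b` by adding `a-1` edges
between the clique part `{a,…,n-b-2}` and the independent part `{n-b-1,…,n-1}`. -/
def GFamily (n a b : ℕ) (G : SimpleGraph (Fin n)) : Prop :=
  ∃ F : Finset (Fin n × Fin n), F.card = a - 1 ∧
    (∀ p ∈ F, a ≤ (p.1 : ℕ) ∧ (p.1 : ℕ) < n - b - 1 ∧ n - b - 1 ≤ (p.2 : ℕ)) ∧
    G = baseGraph n a b ⊔ SimpleGraph.fromEdgeSet ((fun p : Fin n × Fin n => s(p.1, p.2)) '' F)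

/-!
Let `S` be the `K_a` and `T` the `b + 1` independent vertices. A fractional `[a,b]`-factor puts
weight at least `a * (b + 1)` on `T`. At most `a * b` of it lies on edges to `S`, since every
vertex of `S` carries weight at most `b`. The remaining edges at `T` are the `a - 1` added ones,
which carry weight at most `1` each, so the total is at most `a * b + a - 1 < a * (b + 1)`.
-/

section FractionalFactor

variable {V : Type*} [DecidableEq V] {G : SimpleGraph V} {a b : ℕ}

theorem sum_incidenceFinset_eq_sum_neighborFinset {M : Type*} [AddCommMonoid M]
    (G : SimpleGraph V) (v : V) [Fintype (G.neighborSet v)] (f : Sym2 V → M) :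
    ∑ e ∈ G.incidenceFinset v, f e = ∑ u ∈ G.neighborFinset v, f s(v, u) := by
  have incidenceFinset_eq_image : G.incidenceFinset v = (G.neighborFinset v).image (s(v, ·)) := by
    ext e
    induction e with | _ x y
    simp only [SimpleGraph.mem_incidenceFinset, SimpleGraph.mk'_mem_incidenceSet_iff, mem_image,
      SimpleGraph.mem_neighborFinset]
    grind [SimpleGraph.adj_comm]
  rw [incidenceFinset_eq_image, sum_image fun x _ y _ hxy => Sym2.congr_right.mp hxy]

theorem sum_sum_neighborFinset_inter_comm [G.LocallyFinite] {M : Type*} [AddCommMonoid M]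
    (f : Sym2 V → M) (S T : Finset V) :
    ∑ v ∈ T, ∑ u ∈ G.neighborFinset v ∩ S, f s(v, u) =
      ∑ u ∈ S, ∑ v ∈ G.neighborFinset u ∩ T, f s(u, v) := by
  rw [sum_comm' (t' := S) (s' := fun u => G.neighborFinset u ∩ T) fun v u => ?_]
  · exact sum_congr rfl fun u _ => sum_congr rfl fun v _ => by rw [Sym2.eq_swap]
  · simp only [mem_inter, SimpleGraph.mem_neighborFinset, G.adj_comm v u]
    tauto

variable [Fintype V]

theorem hasFractionalABFactor_iff_sum_neighborFinset [DecidableRel G.Adj] :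
    G.HasFractionalABFactor a b ↔
      ∃ h : Sym2 V → ℝ, (∀ e ∈ G.edgeSet, 0 ≤ h e ∧ h e ≤ 1) ∧
        ∀ v, (a : ℝ) ≤ ∑ u ∈ G.neighborFinset v, h s(v, u) ∧
          ∑ u ∈ G.neighborFinset v, h s(v, u) ≤ (b : ℝ) := by
  simp only [SimpleGraph.HasFractionalABFactor, sum_incidenceFinset_eq_sum_neighborFinset]
  convert! Iff.rfl

theorem hasFractionalABFactor_of_hasABFactor (hG : G.HasABFactor a b) :
    G.HasFractionalABFactor a b := by
  classical
  obtain ⟨H, hHG, hdeg⟩ := hG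
  have sum_indicator_eq_degree (v : V) :
      ∑ u ∈ G.neighborFinset v, H.edgeSet.indicator (1 : Sym2 V → ℝ) s(v, u) = H.degree v := by
    have filter_neighborFinset :
        {u ∈ G.neighborFinset v | s(v, u) ∈ H.edgeSet} = H.neighborFinset v := by
      ext u
      simpa using fun hvu => hHG hvu
    simp only [Set.indicator_apply, Pi.one_apply, sum_boole, filter_neighborFinset,
      SimpleGraph.card_neighborFinset_eq_degree]
  refine hasFractionalABFactor_iff_sum_neighborFinset.2 ⟨H.edgeSet.indicator 1, fun e _ =>
    ⟨Set.indicator_nonneg (fun _ _ => zero_le_one) e,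
      Set.indicator_le_self' (fun _ _ => zero_le_one) e⟩, fun v => ?_⟩
  rw [sum_indicator_eq_degree, Nat.cast_le, Nat.cast_le]
  convert! hdeg v

/-- The easy direction of Anstee's criterion for fractional `[a,b]`-factors. -/
theorem mul_card_le_of_hasFractionalABFactor [DecidableRel G.Adj]
    (hG : G.HasFractionalABFactor a b) (S T : Finset V) :
    a * #T ≤ b * #S + ∑ v ∈ T, #(G.neighborFinset v \ S) := by
  obtain ⟨h, h_mem_unit, h_sum⟩ := hasFractionalABFactor_iff_sum_neighborFinset.1 hG
  have weight_into_le : ∑ v ∈ T, ∑ u ∈ G.neighborFinset v ∩ S, h s(v, u) ≤ (b * #S : ℝ) :=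
    calc ∑ v ∈ T, ∑ u ∈ G.neighborFinset v ∩ S, h s(v, u)
        = ∑ u ∈ S, ∑ v ∈ G.neighborFinset u ∩ T, h s(u, v) :=
          sum_sum_neighborFinset_inter_comm h S T
      _ ≤ ∑ u ∈ S, ∑ v ∈ G.neighborFinset u, h s(u, v) := by
          refine sum_le_sum fun u _ => sum_le_sum_of_subset_of_nonneg inter_subset_left ?_
          exact fun v huv _ => (h_mem_unit _ ((G.mem_neighborFinset u v).1 huv)).1
      _ ≤ ∑ _u ∈ S, (b : ℝ) := sum_le_sum fun u _ => (h_sum u).2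
      _ = b * #S := by rw [sum_const, nsmul_eq_mul, mul_comm]
  have weight_outside_le (v : V) :
      ∑ u ∈ G.neighborFinset v \ S, h s(v, u) ≤ #(G.neighborFinset v \ S) := by
    refine (sum_le_card_nsmul _ _ 1 fun u hu => ?_).trans_eq (nsmul_one _)
    exact (h_mem_unit _ ((G.mem_neighborFinset v u).1 (mem_sdiff.1 hu).1)).2
  suffices (a * #T : ℝ) ≤ b * #S + ∑ v ∈ T, (#(G.neighborFinset v \ S) : ℝ) by exact_mod_cast this
  calc (a * #T : ℝ) = ∑ _v ∈ T, (a : ℝ) := by rw [sum_const, nsmul_eq_mul, mul_comm]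
    _ ≤ ∑ v ∈ T, ∑ u ∈ G.neighborFinset v, h s(v, u) := sum_le_sum fun v _ => (h_sum v).1
    _ = ∑ v ∈ T, ∑ u ∈ G.neighborFinset v ∩ S, h s(v, u)
        + ∑ v ∈ T, ∑ u ∈ G.neighborFinset v \ S, h s(v, u) := by
          simp only [← sum_add_distrib, sum_inter_add_sum_sdiff]
    _ ≤ b * #S + ∑ v ∈ T, (#(G.neighborFinset v \ S) : ℝ) :=
          add_le_add weight_into_le (sum_le_sum fun v _ => weight_outside_le v)

end FractionalFactor

/-- The vertices of `K_a` in the join `K_a ∨ (K_{n-a-b-1} ∪ (b+1)K_1)`, labelled as in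
`baseGraph`; these are the vertices deleted in the counting argument. -/
def dominatingPart (n a : ℕ) : Finset (Fin n) := {v | (v : ℕ) < a}

/-- The vertices of `(b+1)K_1` in the join `K_a ∨ (K_{n-a-b-1} ∪ (b+1)K_1)`, labelled as in
`baseGraph`: the last `b+1` vertices, provided `b+1 ≤ n` so that the subtraction does not
truncate. -/
def independentPart (n b : ℕ) : Finset (Fin n) := {v | n - b - 1 ≤ (v : ℕ)}

theorem card_dominatingPart {n a : ℕ} (h : a ≤ n) : #(dominatingPart n a) = a := by
  rw [dominatingPart, Fin.card_filter_val_lt, min_eq_right h]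

theorem card_independentPart {n b : ℕ} (h : b + 1 ≤ n) : #(independentPart n b) = b + 1 := by
  simp only [independentPart, ← not_lt, ← compl_filter, card_compl, Fin.card_filter_val_lt,
    Fintype.card_fin]
  omega

theorem not_baseGraph_adj_of_mem_independentPart {n a b : ℕ} (hn : a + b + 1 ≤ n) {u v : Fin n}
    (hv : v ∈ independentPart n b) (hu : u ∉ dominatingPart n a) :
    ¬ (baseGraph n a b).Adj v u := by
  simp only [independentPart, dominatingPart, mem_filter_univ] at hv hu
  rw [baseGraph, SimpleGraph.fromRel_adj]
  omega

theorem GFamily.sum_card_neighborFinset_sdiff_le {n a b : ℕ} (hn : a + b + 1 ≤ n)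
    {G : SimpleGraph (Fin n)} [DecidableRel G.Adj] (hG : GFamily n a b G) :
    ∑ v ∈ independentPart n b, #(G.neighborFinset v \ dominatingPart n a) ≤ a - 1 := by
  obtain ⟨F, hF_card, hF, hG_eq⟩ := hG
  have neighborFinset_sdiff_subset (v : Fin n) (hv : v ∈ independentPart n b) :
      G.neighborFinset v \ dominatingPart n a ⊆ {p ∈ F | p.2 = v}.image Prod.fst := by
    intro u hu
    obtain ⟨hvu, hu⟩ := mem_sdiff.1 hu
    rw [SimpleGraph.mem_neighborFinset, hG_eq, SimpleGraph.sup_adj,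
      or_iff_right (not_baseGraph_adj_of_mem_independentPart hn hv hu),
      SimpleGraph.fromEdgeSet_adj] at hvu
    obtain ⟨⟨⟨x, y⟩, hxy, h_edge⟩, -⟩ := hvu
    rcases Sym2.eq_iff.1 h_edge with ⟨rfl, rfl⟩ | ⟨rfl, rfl⟩
    · have hx := (hF _ hxy).2.1
      rw [independentPart, mem_filter_univ] at hv
      omega
    · exact mem_image.2 ⟨(x, y), mem_filter.2 ⟨hxy, rfl⟩, rfl⟩
  calc ∑ v ∈ independentPart n b, #(G.neighborFinset v \ dominatingPart n a)
      ≤ ∑ v ∈ independentPart n b, #{p ∈ F | p.2 = v} :=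
        sum_le_sum fun v hv => (card_le_card (neighborFinset_sdiff_subset v hv)).trans card_image_le
    _ ≤ #F := by
      rw [sum_card_fiberwise_eq_card_filter]
      exact card_filter_le _ _
    _ = a - 1 := hF_card

theorem GFamily_no_factor_general (a b n : ℕ) (ha : 0 < a) (hn : a + b + 1 ≤ n)
    (G : SimpleGraph (Fin n)) (hG : GFamily n a b G) :
    ¬ G.HasFractionalABFactor a b ∧ ¬ G.HasABFactor a b := by
  classical
  have no_fractional_factor : ¬ G.HasFractionalABFactor a b := fun h => by
    have card_bound :=
      mul_card_le_of_hasFractionalABFactor h (dominatingPart n a) (independentPart n b)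
    rw [card_dominatingPart (by omega), card_independentPart (by omega)] at card_bound
    have few_edges := hG.sum_card_neighborFinset_sdiff_le hn
    have : a * (b + 1) = b * a + a := by ring
    omega
  exact ⟨no_fractional_factor, mt hasFractionalABFactor_of_hasABFactor no_fractional_factor⟩

/-- Every member of `𝒢_n^{a,b}` has no fractional `[a,b]`-factor, and in particular
no `[a,b]`-factor. -/
theorem GFamily_no_factor (a b n : ℕ) (ha : 0 < a) (hab : a < b) (hn : a + b + 2 ≤ n)
    (G : SimpleGraph (Fin n)) (hG : GFamily n a b G) :
    ¬ G.HasFractionalABFactor a b ∧ ¬ G.HasABFactor a b :=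
  GFamily_no_factor_general a b n ha (by omega) G hG
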